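/- (Boundary identity via the multiplier (x−1)∂_x y.) Let a be a weight, T > 0, and let y be a classical solution of the degenerate wave equation on [0,T] with y(t,c) = y(t,d) = 0 for all t ∈ [0,T], satisfying for every t ∈ [0,T]: lim_{x↗1} (1−x)·(∂_t y(t,x))² = 0, lim_{x↘1} (x−1)·(∂_t y(t,x))² = 0, lim_{x↗1} (1−x)·a(x)·(∂_x y(t,x))² = 0 and lim_{x↘1} (x−1)·a(x)·(∂_x y(t,x))² = 0; assume there exists h ∈ L¹(c,d) dominating (∂_t y(t,x))² + (1 + (|x−1|·|a'(x)|)/a(x))·a(x)·(∂_x y(t,x))² + |x−1|·(|∂_x y(t,x)·∂_{tt} y(t,x)| + |∂_t y(t,x)·∂_{tx} y(t,x)|) for all (t,x) ∈ [0,T] × ((c,d) \ {1}). Then (1−c)·a(c)·∫_0^T (∂_x y(t,c))² dt + (d−1)·a(d)·∫_0^T (∂_x y(t,d))² dt = 2·∫_{(c,d)} [ (x−1)·∂_x y(t,x)·∂_t y(t,x) ]_{t=0}^{t=T} dx + ∫_0^T ∫_{(c,d)} ( (∂_t y(t,x))² + [1 − (x−1)·a'(x)/a(x)]·a(x)·(∂_x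 y(t,x))² ) dx dt. -/

import Mathlib

open MeasureTheory Set Filter Topology

noncomputable section

/-- A *weight* on `[c,d]` with degeneration point `1`. -/
structure IsWeight (c d : ℝ) (a a' : ℝ → ℝ) : Prop where
  cont : ContinuousOn a (Set.Icc c d)
  hderiv : ∀ x ∈ Set.Icc c d \ {1}, HasDerivWithinAt a (a' x) (Set.Icc c d \ {1}) x
  contDeriv : ContinuousOn a' (Set.Icc c d \ {1})
  zero_at_one : a 1 = 0
  pos : ∀ x ∈ Set.Icc c d \ {1}, 0 < a x

/-- A classical solution `y` of the degenerate wave equation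
`∂_tt y = ∂_x (a ∂_x y)` on `[0,T] × ([c,1) ∪ (1,d])`, carrying its partial
derivatives `yt = ∂_t y`, `yx = ∂_x y`, `ytt = ∂_tt y`, `ytx = ∂_x ∂_t y` and
`ww = ∂_x (a ∂_x y)`, all continuous on `[0,T] × ([c,1) ∪ (1,d])`. -/
structure ClassicalSolution (c d T : ℝ) (a : ℝ → ℝ)
    (y yt yx ytt ytx ww : ℝ → ℝ → ℝ) : Prop where
  dt : ∀ t ∈ Set.Icc (0:ℝ) T, ∀ x ∈ Set.Icc c d \ {1},
    HasDerivWithinAt (fun s => y s x) (yt t x) (Set.Icc 0 T) t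
  dtt : ∀ t ∈ Set.Icc (0:ℝ) T, ∀ x ∈ Set.Icc c d \ {1},
    HasDerivWithinAt (fun s => yt s x) (ytt t x) (Set.Icc 0 T) t
  dx : ∀ t ∈ Set.Icc (0:ℝ) T, ∀ x ∈ Set.Icc c d \ {1},
    HasDerivWithinAt (fun z => y t z) (yx t x) (Set.Icc c d \ {1}) x
  dtx : ∀ t ∈ Set.Icc (0:ℝ) T, ∀ x ∈ Set.Icc c d \ {1},
    HasDerivWithinAt (fun z => yt t z) (ytx t x) (Set.Icc c d \ {1}) x
  dax : ∀ t ∈ Set.Icc (0:ℝ) T, ∀ x ∈ Set.Icc c d \ {1},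
    HasDerivWithinAt (fun z => a z * yx t z) (ww t x) (Set.Icc c d \ {1}) x
  cy : ContinuousOn (fun p : ℝ × ℝ => y p.1 p.2) (Set.Icc 0 T ×ˢ (Set.Icc c d \ {1}))
  cyt : ContinuousOn (fun p : ℝ × ℝ => yt p.1 p.2) (Set.Icc 0 T ×ˢ (Set.Icc c d \ {1}))
  cyx : ContinuousOn (fun p : ℝ × ℝ => yx p.1 p.2) (Set.Icc 0 T ×ˢ (Set.Icc c d \ {1}))
  cytt : ContinuousOn (fun p : ℝ × ℝ => ytt p.1 p.2) (Set.Icc 0 T ×ˢ (Set.Icc c d \ {1}))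
  cytx : ContinuousOn (fun p : ℝ × ℝ => ytx p.1 p.2) (Set.Icc 0 T ×ˢ (Set.Icc c d \ {1}))
  cww : ContinuousOn (fun p : ℝ × ℝ => ww p.1 p.2) (Set.Icc 0 T ×ˢ (Set.Icc c d \ {1}))
  wave : ∀ t ∈ Set.Icc (0:ℝ) T, ∀ x ∈ Set.Ioo c d \ {1}, ytt t x = ww t x

/-!
Fix `t`. By the wave equation, the flux `(x - 1) ((∂_t y)² + a (∂_x y)²)` has `x`-derivative
`2 ∂_t ((x - 1) ∂_x y ∂_t y)` plus the integrand of the last term of the identity. The four limit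
hypotheses say exactly that the flux extends continuously by `0` across the degeneracy, so the
fundamental theorem of calculus applies on all of `[c, d]`: the boundary terms are the values of the
flux at `c` and `d`. Integrating in time, the domination hypothesis allows Fubini's theorem to turn
the time derivative into the bracket at `t = 0` and `t = T`.
-/

section Calculus

variable {E : Type*} [NormedAddCommGroup E] [NormedSpace ℝ E]

lemma hasDerivAt_intervalIntegral_of_continuousOn {F F' : ℝ → ℝ → E} {U : Set ℝ} {a b x : ℝ}
    (hU : U ∈ 𝓝 x) (hF : ∀ z ∈ U, ContinuousOn (fun s => F s z) (uIcc a b))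
    (hderiv : ∀ s ∈ uIcc a b, ∀ z ∈ U, HasDerivAt (F s) (F' s z) z)
    (hF' : ContinuousOn F'.uncurry (uIcc a b ×ˢ U)) :
    HasDerivAt (fun z => ∫ s in a..b, F s z) (∫ s in a..b, F' s x) x := by
  obtain ⟨ε, hε, hball⟩ := Metric.nhds_basis_closedBall.mem_iff.1 hU
  obtain ⟨C, hC⟩ := (isCompact_uIcc.prod (isCompact_closedBall x ε)).exists_bound_of_continuousOn
    (hF'.mono (prod_mono_right hball))
  have hint : ∀ z ∈ U, IntervalIntegrable (fun s => F s z) volume a b :=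
    fun z hz => (hF z hz).intervalIntegrable
  refine (intervalIntegral.hasDerivAt_integral_of_dominated_loc_of_deriv_le
    (F := fun z s => F s z) (F' := fun z s => F' s z) (bound := fun _ => C)
    (Metric.closedBall_mem_nhds x hε) ?_ (hint x (mem_of_mem_nhds hU)) ?_ ?_ (by simp) ?_).2
  · filter_upwards [hU] with z hz using (hint z hz).def'.aestronglyMeasurable
  · exact ((hF'.uncurry_right x (mem_of_mem_nhds hU)).mono uIoc_subset_uIcc).aestronglyMeasurable
      measurableSet_uIoc
  · exact .of_forall fun s hs z hz => hC (s, z) ⟨uIoc_subset_uIcc hs, hz⟩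
  · exact .of_forall fun s hs z hz => hderiv s (uIoc_subset_uIcc hs) z (hball hz)

variable [CompleteSpace E]

lemma intervalIntegral_eq_sub_of_hasDerivWithinAt_Icc {f f' : ℝ → E} {a b : ℝ} (hab : a ≤ b)
    (hderiv : ∀ t ∈ Icc a b, HasDerivWithinAt f (f' t) (Icc a b) t)
    (hcont : ContinuousOn f' (Icc a b)) : ∫ t in a..b, f' t = f b - f a :=
  intervalIntegral.integral_eq_sub_of_hasDerivAt_of_le hab
    (fun t ht => (hderiv t ht).continuousWithinAt)
    (fun t ht => (hderiv t (Ioo_subset_Icc_self ht)).hasDerivAt (Icc_mem_nhds ht.1 ht.2))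
    (hcont.intervalIntegrable_of_Icc hab)

section MixedPartials

variable {f ft fx ftx : ℝ → ℝ → E} {U : Set ℝ} {a b x : ℝ}

lemma intervalIntegral_mixedPartial_eq_sub (hab : a ≤ b) (hU : IsOpen U) (hx : x ∈ U)
    (hft : ∀ t ∈ Icc a b, ∀ z ∈ U, HasDerivWithinAt (fun s => f s z) (ft t z) (Icc a b) t)
    (hfx : ∀ t ∈ Icc a b, HasDerivAt (f t) (fx t x) x)
    (hftx : ∀ t ∈ Icc a b, ∀ z ∈ U, HasDerivAt (ft t) (ftx t z) z)
    (hft_cont : ∀ z ∈ U, ContinuousOn (fun t => ft t z) (Icc a b))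
    (hftx_cont : ContinuousOn ftx.uncurry (Icc a b ×ˢ U)) :
    ∫ t in a..b, ftx t x = fx b x - fx a x := by
  have hderiv_integral :
      HasDerivAt (fun z => ∫ t in a..b, ft t z) (∫ t in a..b, ftx t x) x := by
    rw [← uIcc_of_le hab] at hft_cont hftx hftx_cont
    exact hasDerivAt_intervalIntegral_of_continuousOn (hU.mem_nhds hx) hft_cont hftx hftx_cont
  have hintegral : (fun z => ∫ t in a..b, ft t z) =ᶠ[𝓝 x] fun z => f b z - f a z := by
    filter_upwards [hU.mem_nhds hx] with z hz
    exact intervalIntegral_eq_sub_of_hasDerivWithinAt_Icc hab (fun t ht => hft t ht z hz)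
      (hft_cont z hz)
  exact (hderiv_integral.congr_of_eventuallyEq hintegral.symm).unique
    ((hfx b (right_mem_Icc.2 hab)).sub (hfx a (left_mem_Icc.2 hab)))

lemma hasDerivWithinAt_of_mixedPartial (hU : IsOpen U) (hx : x ∈ U)
    (hft : ∀ t ∈ Icc a b, ∀ z ∈ U, HasDerivWithinAt (fun s => f s z) (ft t z) (Icc a b) t)
    (hfx : ∀ t ∈ Icc a b, HasDerivAt (f t) (fx t x) x)
    (hftx : ∀ t ∈ Icc a b, ∀ z ∈ U, HasDerivAt (ft t) (ftx t z) z)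
    (hft_cont : ∀ z ∈ U, ContinuousOn (fun t => ft t z) (Icc a b))
    (hftx_cont : ContinuousOn ftx.uncurry (Icc a b ×ˢ U)) {t : ℝ} (ht : t ∈ Icc a b) :
    HasDerivWithinAt (fun s => fx s x) (ftx t x) (Icc a b) t := by
  have hprimitive : ∀ s ∈ Icc a b, fx s x = fx a x + ∫ r in a..s, ftx r x := by
    intro s hs
    have hsub : Icc a s ⊆ Icc a b := Icc_subset_Icc_right hs.2
    rw [intervalIntegral_mixedPartial_eq_sub hs.1 hU hx
      (fun r hr z hz => (hft r (hsub hr) z hz).mono hsub) (fun r hr => hfx r (hsub hr))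
      (fun r hr => hftx r (hsub hr)) (fun z hz => (hft_cont z hz).mono hsub)
      (hftx_cont.mono (prod_mono_left hsub)), add_sub_cancel]
  have hcont : ContinuousOn (fun s => ftx s x) (Icc a b) := hftx_cont.uncurry_right x hx
  have : Fact (t ∈ Icc a b) := ⟨ht⟩
  have hderiv : HasDerivWithinAt (fun s => ∫ r in a..s, ftx r x) (ftx t x) (Icc a b) t :=
    intervalIntegral.integral_hasDerivWithinAt_right
      ((hcont.mono (Icc_subset_Icc_right ht.2)).intervalIntegrable_of_Icc ht.1)
      (hcont.stronglyMeasurableAtFilter_nhdsWithin measurableSet_Icc t) (hcont t ht)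
  exact (hderiv.const_add (fx a x)).congr hprimitive (hprimitive t ht)

end MixedPartials

end Calculus

section Integration

lemma restrict_sdiff_singleton {α : Type*} [MeasurableSpace α] (μ : Measure α)
    [NullSingletonClass μ] (s : Set α) (p : α) : μ.restrict (s \ {p}) = μ.restrict s :=
  Measure.restrict_congr_set (sdiff_null_ae_eq_self (measure_singleton p))

variable {α β E : Type*} [TopologicalSpace α] [MeasurableSpace α] [OpensMeasurableSpace α]
  [TopologicalSpace β] [MeasurableSpace β] [OpensMeasurableSpace β] [NormedAddCommGroup E]
  {μ : Measure α} {ν : Measure β} {s : Set α} {t : Set β} {h : β → ℝ}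

lemma integrableOn_of_continuousOn_of_norm_le [SecondCountableTopologyEither β E] {f : β → E}
    (ht : MeasurableSet t) (hh : IntegrableOn h t ν) (hf : ContinuousOn f t)
    (hle : ∀ x ∈ t, ‖f x‖ ≤ h x) : IntegrableOn f t ν :=
  hh.mono' (hf.aestronglyMeasurable ht) (ae_restrict_of_forall_mem ht hle)

lemma integrable_uncurry_of_continuousOn_of_norm_le [SecondCountableTopology α]
    [SecondCountableTopology β] [SFinite μ] [SFinite ν] {f : α → β → E}
    (hs : MeasurableSet s) (hμs : μ s ≠ ⊤) (ht : MeasurableSet t) (hh : IntegrableOn h t ν)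
    (hf : ContinuousOn f.uncurry (s ×ˢ t)) (hle : ∀ x ∈ s, ∀ y ∈ t, ‖f x y‖ ≤ h y) :
    Integrable f.uncurry ((μ.restrict s).prod (ν.restrict t)) := by
  have : IsFiniteMeasure (μ.restrict s) := isFiniteMeasure_restrict.2 hμs
  have hh_prod : Integrable (fun q : α × β => h q.2) ((μ.restrict s).prod (ν.restrict t)) :=
    Integrable.comp_snd hh _
  rw [Measure.prod_restrict] at hh_prod ⊢
  exact integrableOn_of_continuousOn_of_norm_le (hs.prod ht) hh_prod hf
    fun q hq => hle q.1 hq.1 q.2 hq.2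

variable [SecondCountableTopology β] [SFinite ν] {a b : ℝ}

lemma integrable_uncurry_uIoc_of_continuousOn_of_norm_le {f : ℝ → β → E} (hab : a ≤ b)
    (ht : MeasurableSet t) (hh : IntegrableOn h t ν)
    (hf : ContinuousOn f.uncurry (Icc a b ×ˢ t)) (hle : ∀ r ∈ Icc a b, ∀ x ∈ t, ‖f r x‖ ≤ h x) :
    Integrable f.uncurry ((volume.restrict (uIoc a b)).prod (ν.restrict t)) := by
  have hsub : uIoc a b ⊆ Icc a b := uIoc_of_le hab ▸ Ioc_subset_Icc_self
  exact integrable_uncurry_of_continuousOn_of_norm_le measurableSet_uIoc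
    (by simp [uIoc_of_le hab]) ht hh (hf.mono (prod_mono_left hsub)) fun r hr => hle r (hsub hr)

variable [NormedSpace ℝ E]

lemma intervalIntegrable_setIntegral_of_continuousOn_of_norm_le {f : ℝ → β → E} (hab : a ≤ b)
    (ht : MeasurableSet t) (hh : IntegrableOn h t ν)
    (hf : ContinuousOn f.uncurry (Icc a b ×ˢ t)) (hle : ∀ r ∈ Icc a b, ∀ x ∈ t, ‖f r x‖ ≤ h x) :
    IntervalIntegrable (fun r => ∫ x in t, f r x ∂ν) volume a b :=
  intervalIntegrable_iff.2
    (integrable_uncurry_uIoc_of_continuousOn_of_norm_le hab ht hh hf hle).integral_prod_left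

lemma setIntegral_sub_eq_intervalIntegral_setIntegral [CompleteSpace E] {g g' : ℝ → β → E}
    (hab : a ≤ b) (ht : MeasurableSet t) (hh : IntegrableOn h t ν)
    (hderiv : ∀ r ∈ Icc a b, ∀ x ∈ t, HasDerivWithinAt (fun q => g q x) (g' r x) (Icc a b) r)
    (hg' : ContinuousOn g'.uncurry (Icc a b ×ˢ t))
    (hle : ∀ r ∈ Icc a b, ∀ x ∈ t, ‖g' r x‖ ≤ h x) :
    ∫ x in t, (g b x - g a x) ∂ν = ∫ r in a..b, ∫ x in t, g' r x ∂ν := by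
  rw [intervalIntegral_integral_swap
    (integrable_uncurry_uIoc_of_continuousOn_of_norm_le hab ht hh hg' hle)]
  refine setIntegral_congr_fun ht fun x hx => ?_
  exact (intervalIntegral_eq_sub_of_hasDerivWithinAt_Icc hab (fun r hr => hderiv r hr x hx)
    (hg'.uncurry_right x hx)).symm

end Integration

section Multiplier

/-- The flux `(x - p) (u² + a v²)` of the multiplier `(x - p) ∂_x y` at a fixed time, where
`u = ∂_t y` and `v = ∂_x y`. -/
def multiplierFlux (p : ℝ) (a u v : ℝ → ℝ) (x : ℝ) : ℝ :=
  (x - p) * (u x ^ 2 + a x * v x ^ 2)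

/-- The time derivative of `(x - p) ∂_x y ∂_t y` at a fixed time, where `u = ∂_t y`, `v = ∂_x y`,
`u' = ∂_x ∂_t y` and `w = ∂_tt y`. -/
def multiplierRate (p : ℝ) (u v u' w : ℝ → ℝ) (x : ℝ) : ℝ :=
  (x - p) * (u' x * u x + v x * w x)

/-- The distributed term of the multiplier identity at a fixed time, where `u = ∂_t y`,
`v = ∂_x y` and `a'` is the derivative of the weight `a`. -/
def multiplierSource (p : ℝ) (a a' u v : ℝ → ℝ) (x : ℝ) : ℝ :=
  u x ^ 2 + (1 - (x - p) * a' x / a x) * a x * v x ^ 2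

/-- The quantity whose domination by an integrable function makes both `multiplierRate` and
`multiplierSource` integrable; the arguments are those of these two definitions. -/
def multiplierMajorant (p : ℝ) (a a' u v u' w : ℝ → ℝ) (x : ℝ) : ℝ :=
  u x ^ 2 + (1 + |x - p| * |a' x| / a x) * a x * v x ^ 2
    + |x - p| * (|v x * w x| + |u x * u' x|)

variable {p x : ℝ} {a a' u v u' w : ℝ → ℝ}

lemma abs_multiplierRate_le (ha : 0 ≤ a x) :
    |multiplierRate p u v u' w x| ≤ multiplierMajorant p a a' u v u' w x := by
  calc |multiplierRate p u v u' w x|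
      = |x - p| * |v x * w x + u x * u' x| := by
        rw [multiplierRate, abs_mul, add_comm, mul_comm (u' x)]
    _ ≤ |x - p| * (|v x * w x| + |u x * u' x|) := by gcongr; exact abs_add_le _ _
    _ ≤ multiplierMajorant p a a' u v u' w x := le_add_of_nonneg_left (by positivity)

lemma abs_multiplierSource_le (ha : 0 ≤ a x) :
    |multiplierSource p a a' u v x| ≤ multiplierMajorant p a a' u v u' w x := by
  have hcoeff : |1 - (x - p) * a' x / a x| ≤ 1 + |x - p| * |a' x| / a x := by
    simpa only [abs_one, abs_div, abs_mul, abs_of_nonneg ha] using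
      abs_sub 1 ((x - p) * a' x / a x)
  calc |multiplierSource p a a' u v x|
      ≤ |u x ^ 2| + |(1 - (x - p) * a' x / a x) * a x * v x ^ 2| := abs_add_le _ _
    _ = u x ^ 2 + |1 - (x - p) * a' x / a x| * a x * v x ^ 2 := by
        simp only [abs_mul, abs_of_nonneg ha, abs_sq]
    _ ≤ u x ^ 2 + (1 + |x - p| * |a' x| / a x) * a x * v x ^ 2 := by gcongr
    _ ≤ multiplierMajorant p a a' u v u' w x := le_add_of_nonneg_right (by positivity)

-- `v` need not be differentiable: the second summand of the flux is `(x - p) (a v)² / a`.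
lemma hasDerivAt_multiplierFlux (ha : HasDerivAt a (a' x) x) (hax : a x ≠ 0)
    (hu : HasDerivAt u (u' x) x) (hav : HasDerivAt (fun z => a z * v z) (w x) x) :
    HasDerivAt (multiplierFlux p a u v)
      (2 * multiplierRate p u v u' w x + multiplierSource p a a' u v x) x := by
  have hflux : multiplierFlux p a u v =ᶠ[𝓝 x]
      fun z => (z - p) * (u z ^ 2 + (a z * v z) ^ 2 / a z) := by
    filter_upwards [ha.continuousAt.eventually_ne hax] with z hz
    rw [multiplierFlux, mul_pow, sq (a z), mul_assoc, mul_div_cancel_left₀ _ hz]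
  refine ((((hasDerivAt_id x).sub_const p).mul
    ((hu.fun_pow 2).add ((hav.fun_pow 2).div ha hax))).congr_of_eventuallyEq hflux).congr_deriv ?_
  simp only [multiplierRate, multiplierSource, id, Pi.add_apply, Pi.div_apply]
  field_simp
  ring

lemma continuousAt_multiplierFlux
    (hu_left : Tendsto (fun x => (p - x) * u x ^ 2) (𝓝[<] p) (𝓝 0))
    (hu_right : Tendsto (fun x => (x - p) * u x ^ 2) (𝓝[>] p) (𝓝 0))
    (hv_left : Tendsto (fun x => (p - x) * a x * v x ^ 2) (𝓝[<] p) (𝓝 0))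
    (hv_right : Tendsto (fun x => (x - p) * a x * v x ^ 2) (𝓝[>] p) (𝓝 0)) :
    ContinuousAt (multiplierFlux p a u v) p := by
  have hzero : multiplierFlux p a u v p = 0 := by rw [multiplierFlux, sub_self, zero_mul]
  rw [continuousAt_iff_continuous_left'_right', ContinuousWithinAt, ContinuousWithinAt, hzero]
  constructor
  · have h := (hu_left.add hv_left).neg
    rw [add_zero, neg_zero] at h
    exact h.congr fun x => by rw [multiplierFlux]; ring
  · have h := hu_right.add hv_right
    rw [add_zero] at h
    exact h.congr fun x => by rw [multiplierFlux]; ring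

end Multiplier

lemma Icc_sdiff_singleton_mem_nhds {c d p x : ℝ} (hx : x ∈ Ioo c d \ {p}) :
    Icc c d \ {p} ∈ 𝓝 x :=
  mem_of_superset ((isOpen_Ioo.sdiff isClosed_singleton).mem_nhds hx)
    (sdiff_subset_sdiff_left Ioo_subset_Icc_self)

namespace ClassicalSolution

variable {c d T : ℝ} {a a' : ℝ → ℝ} {y yt yx ytt ytx ww : ℝ → ℝ → ℝ}

lemma hasDerivWithinAt_yx (hsol : ClassicalSolution c d T a y yt yx ytt ytx ww) {t x : ℝ}
    (ht : t ∈ Icc 0 T) (hx : x ∈ Ioo c d \ {1}) :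
    HasDerivWithinAt (fun s => yx s x) (ytx t x) (Icc 0 T) t := by
  have hsub : Ioo c d \ {1} ⊆ Icc c d \ {1} := sdiff_subset_sdiff_left Ioo_subset_Icc_self
  exact hasDerivWithinAt_of_mixedPartial (isOpen_Ioo.sdiff isClosed_singleton) hx
    (fun s hs z hz => hsol.dt s hs z (hsub hz))
    (fun s hs => (hsol.dx s hs x (hsub hx)).hasDerivAt (Icc_sdiff_singleton_mem_nhds hx))
    (fun s hs z hz => (hsol.dtx s hs z (hsub hz)).hasDerivAt (Icc_sdiff_singleton_mem_nhds hz))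
    (fun z hz => hsol.cyt.uncurry_right z (hsub hz)) (hsol.cytx.mono (prod_mono_right hsub)) ht

lemma hasDerivWithinAt_multiplier_mul_yt (hsol : ClassicalSolution c d T a y yt yx ytt ytx ww)
    {t x : ℝ} (ht : t ∈ Icc 0 T) (hx : x ∈ Ioo c d \ {1}) :
    HasDerivWithinAt (fun s => (x - 1) * yx s x * yt s x)
      (multiplierRate 1 (yt t) (yx t) (ytx t) (ytt t) x) (Icc 0 T) t := by
  refine (((hsol.hasDerivWithinAt_yx ht hx).const_mul (x - 1)).mul
    (hsol.dtt t ht x ⟨Ioo_subset_Icc_self hx.1, hx.2⟩)).congr_deriv ?_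
  rw [multiplierRate]
  ring

lemma yt_eq_zero_of_dirichlet (hsol : ClassicalSolution c d T a y yt yx ytt ytx ww) (hT : 0 < T)
    {x : ℝ} (hx : x ∈ Icc c d \ {1}) (hy : ∀ t ∈ Icc 0 T, y t x = 0) {t : ℝ}
    (ht : t ∈ Icc 0 T) : yt t x = 0 :=
  (uniqueDiffOn_Icc hT t ht).eq_deriv _ (hsol.dt t ht x hx)
    ((hasDerivWithinAt_const t _ (0 : ℝ)).congr hy (hy t ht))

lemma intervalIntegral_yt_sq_eq_zero_of_dirichlet
    (hsol : ClassicalSolution c d T a y yt yx ytt ytx ww) (hT : 0 < T) {x : ℝ}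
    (hx : x ∈ Icc c d \ {1}) (hy : ∀ t ∈ Icc 0 T, y t x = 0) :
    ∫ t in (0 : ℝ)..T, yt t x ^ 2 = 0 := by
  refine intervalIntegral.integral_zero_ae (.of_forall fun t ht => ?_)
  rw [uIoc_of_le hT.le] at ht
  rw [hsol.yt_eq_zero_of_dirichlet hT hx hy (Ioc_subset_Icc_self ht), zero_pow two_ne_zero]

lemma continuousOn_multiplierRate (hsol : ClassicalSolution c d T a y yt yx ytt ytx ww) :
    ContinuousOn (fun q : ℝ × ℝ => multiplierRate 1 (yt q.1) (yx q.1) (ytx q.1) (ytt q.1) q.2)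
      (Icc 0 T ×ˢ (Icc c d \ {1})) := by
  have hyt := hsol.cyt
  have hyx := hsol.cyx
  have hytx := hsol.cytx
  have hytt := hsol.cytt
  unfold multiplierRate
  fun_prop

lemma continuousOn_multiplierSource (hw : IsWeight c d a a')
    (hsol : ClassicalSolution c d T a y yt yx ytt ytx ww) :
    ContinuousOn (fun q : ℝ × ℝ => multiplierSource 1 a a' (yt q.1) (yx q.1) q.2)
      (Icc 0 T ×ˢ (Icc c d \ {1})) := by
  have hyt := hsol.cyt
  have hyx := hsol.cyx
  have ha : ContinuousOn (fun q : ℝ × ℝ => a q.2) (Icc 0 T ×ˢ (Icc c d \ {1})) :=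
    hw.cont.comp continuousOn_snd fun q hq => hq.2.1
  have ha' : ContinuousOn (fun q : ℝ × ℝ => a' q.2) (Icc 0 T ×ˢ (Icc c d \ {1})) :=
    hw.contDeriv.comp continuousOn_snd fun q hq => hq.2
  have hcoeff : ContinuousOn (fun q : ℝ × ℝ => (q.2 - 1) * a' q.2 / a q.2)
      (Icc 0 T ×ˢ (Icc c d \ {1})) :=
    ((continuousOn_snd.sub continuousOn_const).mul ha').div ha fun q hq => (hw.pos q.2 hq.2).ne'
  exact (hyt.pow 2).add (((continuousOn_const.sub hcoeff).mul ha).mul (hyx.pow 2))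

lemma continuousOn_multiplierFlux (hw : IsWeight c d a a')
    (hsol : ClassicalSolution c d T a y yt yx ytt ytx ww) {t : ℝ} (ht : t ∈ Icc 0 T)
    (hflux : ContinuousAt (multiplierFlux 1 a (yt t) (yx t)) 1) :
    ContinuousOn (multiplierFlux 1 a (yt t) (yx t)) (Icc c d) := by
  have hyt : ContinuousOn (yt t) (Icc c d \ {1}) := hsol.cyt.uncurry_left t ht
  have hyx : ContinuousOn (yx t) (Icc c d \ {1}) := hsol.cyx.uncurry_left t ht
  have ha : ContinuousOn a (Icc c d \ {1}) := hw.cont.mono sdiff_subset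
  have hsdiff : ContinuousOn (multiplierFlux 1 a (yt t) (yx t)) (Icc c d \ {1}) := by
    unfold multiplierFlux
    fun_prop
  intro x hx
  rcases eq_or_ne x 1 with rfl | hne
  · exact hflux.continuousWithinAt
  · exact (hsdiff x ⟨hx, hne⟩).mono_of_mem_nhdsWithin
      (inter_mem_nhdsWithin _ (isOpen_compl_singleton.mem_nhds hne))

lemma setIntegral_multiplierRate_add_multiplierSource (hcd : c ≤ d) (hw : IsWeight c d a a')
    (hsol : ClassicalSolution c d T a y yt yx ytt ytx ww) {t : ℝ} (ht : t ∈ Icc 0 T)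
    (hflux : ContinuousAt (multiplierFlux 1 a (yt t) (yx t)) 1)
    (hrate : IntegrableOn (multiplierRate 1 (yt t) (yx t) (ytx t) (ytt t)) (Ioo c d \ {1}))
    (hsource : IntegrableOn (multiplierSource 1 a a' (yt t) (yx t)) (Ioo c d \ {1})) :
    2 * (∫ x in Ioo c d \ {1}, multiplierRate 1 (yt t) (yx t) (ytx t) (ytt t) x)
        + ∫ x in Ioo c d \ {1}, multiplierSource 1 a a' (yt t) (yx t) x
      = multiplierFlux 1 a (yt t) (yx t) d - multiplierFlux 1 a (yt t) (yx t) c := by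
  have hderiv : ∀ x ∈ Ioo c d \ {1}, HasDerivAt (multiplierFlux 1 a (yt t) (yx t))
      (2 * multiplierRate 1 (yt t) (yx t) (ytx t) (ytt t) x
        + multiplierSource 1 a a' (yt t) (yx t) x) x := by
    intro x hx
    have hx' : x ∈ Icc c d \ {1} := ⟨Ioo_subset_Icc_self hx.1, hx.2⟩
    have hnhds := Icc_sdiff_singleton_mem_nhds hx
    exact hasDerivAt_multiplierFlux ((hw.hderiv x hx').hasDerivAt hnhds) (hw.pos x hx').ne'
      ((hsol.dtx t ht x hx').hasDerivAt hnhds)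
      (hsol.wave t ht x hx ▸ (hsol.dax t ht x hx').hasDerivAt hnhds)
  have hint := (hrate.const_mul 2).add hsource
  rw [← integral_const_mul, ← integral_add (hrate.const_mul 2) hsource, restrict_sdiff_singleton,
    ← integral_Ioc_eq_integral_Ioo, ← intervalIntegral.integral_of_le hcd]
  rw [restrict_sdiff_singleton] at hint
  exact integral_eq_of_hasDerivAt_off_countable_of_le _ _ hcd (countable_singleton 1)
    (continuousOn_multiplierFlux hw hsol ht hflux) hderiv
    ((intervalIntegrable_iff_integrableOn_Ioo_of_le hcd).2 hint)

lemma intervalIntegrable_multiplierFlux (hsol : ClassicalSolution c d T a y yt yx ytt ytx ww)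
    (hT : 0 ≤ T) {x : ℝ} (hx : x ∈ Icc c d \ {1}) :
    IntervalIntegrable (fun t => multiplierFlux 1 a (yt t) (yx t) x) volume 0 T := by
  have hyt : ContinuousOn (fun t => yt t x) (Icc 0 T) := hsol.cyt.uncurry_right x hx
  have hyx : ContinuousOn (fun t => yx t x) (Icc 0 T) := hsol.cyx.uncurry_right x hx
  refine ContinuousOn.intervalIntegrable_of_Icc hT ?_
  unfold multiplierFlux
  fun_prop

lemma intervalIntegral_multiplierFlux (hsol : ClassicalSolution c d T a y yt yx ytt ytx ww)
    (hT : 0 ≤ T) {x : ℝ} (hx : x ∈ Icc c d \ {1}) :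
    ∫ t in (0 : ℝ)..T, multiplierFlux 1 a (yt t) (yx t) x
      = (x - 1) * ((∫ t in (0 : ℝ)..T, yt t x ^ 2) + a x * ∫ t in (0 : ℝ)..T, yx t x ^ 2) := by
  have hyt : IntervalIntegrable (fun t => yt t x ^ 2) volume 0 T :=
    ((hsol.cyt.uncurry_right x hx).pow 2).intervalIntegrable_of_Icc hT
  have hyx : IntervalIntegrable (fun t => yx t x ^ 2) volume 0 T :=
    ((hsol.cyx.uncurry_right x hx).pow 2).intervalIntegrable_of_Icc hT
  simp only [multiplierFlux, intervalIntegral.integral_const_mul,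
    intervalIntegral.integral_add hyt (hyx.const_mul (a x))]

section Domination

variable {h : ℝ → ℝ}

lemma setIntegral_multiplier_mul_yt_sub (hT : 0 ≤ T) (hw : IsWeight c d a a')
    (hsol : ClassicalSolution c d T a y yt yx ytt ytx ww)
    (hh : IntegrableOn h (Ioo c d \ {1}))
    (hdom : ∀ t ∈ Icc 0 T, ∀ x ∈ Ioo c d \ {1},
      multiplierMajorant 1 a a' (yt t) (yx t) (ytx t) (ytt t) x ≤ h x) :
    ∫ x in Ioo c d \ {1}, ((x - 1) * yx T x * yt T x - (x - 1) * yx 0 x * yt 0 x)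
      = ∫ t in (0 : ℝ)..T, ∫ x in Ioo c d \ {1},
          multiplierRate 1 (yt t) (yx t) (ytx t) (ytt t) x := by
  have hsub : Ioo c d \ {1} ⊆ Icc c d \ {1} := sdiff_subset_sdiff_left Ioo_subset_Icc_self
  exact setIntegral_sub_eq_intervalIntegral_setIntegral hT
    (measurableSet_Ioo.diff (measurableSet_singleton 1)) hh
    (fun t ht x hx => hsol.hasDerivWithinAt_multiplier_mul_yt ht hx)
    (hsol.continuousOn_multiplierRate.mono (prod_mono_right hsub))
    fun t ht x hx => (abs_multiplierRate_le (hw.pos x (hsub hx)).le).trans (hdom t ht x hx)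

lemma intervalIntegral_multiplierRate_add_multiplierSource (hcd : c ≤ d) (hT : 0 ≤ T)
    (hw : IsWeight c d a a') (hsol : ClassicalSolution c d T a y yt yx ytt ytx ww)
    (hflux : ∀ t ∈ Icc 0 T, ContinuousAt (multiplierFlux 1 a (yt t) (yx t)) 1)
    (hh : IntegrableOn h (Ioo c d \ {1}))
    (hdom : ∀ t ∈ Icc 0 T, ∀ x ∈ Ioo c d \ {1},
      multiplierMajorant 1 a a' (yt t) (yx t) (ytx t) (ytt t) x ≤ h x) :
    2 * (∫ t in (0 : ℝ)..T, ∫ x in Ioo c d \ {1},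
          multiplierRate 1 (yt t) (yx t) (ytx t) (ytt t) x)
        + ∫ t in (0 : ℝ)..T, ∫ x in Ioo c d \ {1}, multiplierSource 1 a a' (yt t) (yx t) x
      = ∫ t in (0 : ℝ)..T,
          (multiplierFlux 1 a (yt t) (yx t) d - multiplierFlux 1 a (yt t) (yx t) c) := by
  let R t := multiplierRate 1 (yt t) (yx t) (ytx t) (ytt t)
  let S t := multiplierSource 1 a a' (yt t) (yx t)
  have hsub : Ioo c d \ {1} ⊆ Icc c d \ {1} := sdiff_subset_sdiff_left Ioo_subset_Icc_self
  have hmeas : MeasurableSet (Ioo c d \ {1}) := measurableSet_Ioo.diff (measurableSet_singleton 1)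
  have hR_cont : ContinuousOn R.uncurry (Icc 0 T ×ˢ (Ioo c d \ {1})) :=
    hsol.continuousOn_multiplierRate.mono (prod_mono_right hsub)
  have hS_cont : ContinuousOn S.uncurry (Icc 0 T ×ˢ (Ioo c d \ {1})) :=
    (hsol.continuousOn_multiplierSource hw).mono (prod_mono_right hsub)
  have hR_le : ∀ t ∈ Icc 0 T, ∀ x ∈ Ioo c d \ {1}, ‖R t x‖ ≤ h x := fun t ht x hx =>
    (abs_multiplierRate_le (hw.pos x (hsub hx)).le).trans (hdom t ht x hx)
  have hS_le : ∀ t ∈ Icc 0 T, ∀ x ∈ Ioo c d \ {1}, ‖S t x‖ ≤ h x := fun t ht x hx =>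
    (abs_multiplierSource_le (hw.pos x (hsub hx)).le).trans (hdom t ht x hx)
  rw [← intervalIntegral.integral_const_mul, ← intervalIntegral.integral_add
    ((intervalIntegrable_setIntegral_of_continuousOn_of_norm_le hT hmeas hh hR_cont
      hR_le).const_mul 2)
    (intervalIntegrable_setIntegral_of_continuousOn_of_norm_le hT hmeas hh hS_cont hS_le)]
  refine intervalIntegral.integral_congr fun t ht => ?_
  rw [uIcc_of_le hT] at ht
  exact hsol.setIntegral_multiplierRate_add_multiplierSource hcd hw ht (hflux t ht)
    (integrableOn_of_continuousOn_of_norm_le hmeas hh (hR_cont.uncurry_left t ht) (hR_le t ht))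
    (integrableOn_of_continuousOn_of_norm_le hmeas hh (hS_cont.uncurry_left t ht) (hS_le t ht))

end Domination

end ClassicalSolution

theorem stmt_17_general (c d T : ℝ) (a a' : ℝ → ℝ) (h : ℝ → ℝ)
    (y yt yx ytt ytx ww : ℝ → ℝ → ℝ)
    (hc1 : c < 1) (h1d : 1 < d) (hT : 0 ≤ T)
    (hw : IsWeight c d a a')
    (hsol : ClassicalSolution c d T a y yt yx ytt ytx ww)
    (hyt_left : ∀ t ∈ Icc 0 T, Tendsto (fun x => (1 - x) * yt t x ^ 2) (𝓝[<] 1) (𝓝 0))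
    (hyt_right : ∀ t ∈ Icc 0 T, Tendsto (fun x => (x - 1) * yt t x ^ 2) (𝓝[>] 1) (𝓝 0))
    (hyx_left : ∀ t ∈ Icc 0 T, Tendsto (fun x => (1 - x) * a x * yx t x ^ 2) (𝓝[<] 1) (𝓝 0))
    (hyx_right : ∀ t ∈ Icc 0 T, Tendsto (fun x => (x - 1) * a x * yx t x ^ 2) (𝓝[>] 1) (𝓝 0))
    (hh : IntegrableOn h (Ioo c d))
    (hdom : ∀ t ∈ Icc 0 T, ∀ x ∈ Ioo c d \ {1},
      yt t x ^ 2 + (1 + |x - 1| * |a' x| / a x) * a x * yx t x ^ 2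
        + |x - 1| * (|yx t x * ytt t x| + |yt t x * ytx t x|) ≤ h x) :
    (1 - c) * ((∫ t in (0 : ℝ)..T, yt t c ^ 2) + a c * ∫ t in (0 : ℝ)..T, yx t c ^ 2)
      + (d - 1) * ((∫ t in (0 : ℝ)..T, yt t d ^ 2) + a d * ∫ t in (0 : ℝ)..T, yx t d ^ 2)
    = 2 * (∫ x in Ioo c d, ((x - 1) * yx T x * yt T x - (x - 1) * yx 0 x * yt 0 x))
      + ∫ t in (0 : ℝ)..T, ∫ x in Ioo c d,
          (yt t x ^ 2 + (1 - (x - 1) * a' x / a x) * a x * yx t x ^ 2) := by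
  have hcd : c < d := hc1.trans h1d
  have hc : c ∈ Icc c d \ {1} := ⟨left_mem_Icc.2 hcd.le, hc1.ne⟩
  have hd : d ∈ Icc c d \ {1} := ⟨right_mem_Icc.2 hcd.le, h1d.ne'⟩
  have hh' : IntegrableOn h (Ioo c d \ {1}) := hh.mono_set sdiff_subset
  have hflux : ∀ t ∈ Icc 0 T, ContinuousAt (multiplierFlux 1 a (yt t) (yx t)) 1 := fun t ht =>
    continuousAt_multiplierFlux (hyt_left t ht) (hyt_right t ht) (hyx_left t ht) (hyx_right t ht)
  have hbalance :=
    hsol.intervalIntegral_multiplierRate_add_multiplierSource hcd.le hT hw hflux hh' hdom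
  rw [← hsol.setIntegral_multiplier_mul_yt_sub hT hw hh' hdom, intervalIntegral.integral_sub
      (hsol.intervalIntegrable_multiplierFlux hT hd) (hsol.intervalIntegrable_multiplierFlux hT hc),
    hsol.intervalIntegral_multiplierFlux hT hc, hsol.intervalIntegral_multiplierFlux hT hd,
    restrict_sdiff_singleton] at hbalance
  simp only [multiplierSource] at hbalance
  rw [hbalance]
  ring

/-- Boundary identity via the multiplier `(x-1)·∂_x y`. -/
theorem stmt_17 (c d T : ℝ) (a a' : ℝ → ℝ) (h : ℝ → ℝ)
    (y yt yx ytt ytx ww : ℝ → ℝ → ℝ)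
    (hc : 0 ≤ c) (hc1 : c < 1) (h1d : 1 < d) (hd2 : d ≤ 2) (hT : 0 < T)
    (hw : IsWeight c d a a')
    (hsol : ClassicalSolution c d T a y yt yx ytt ytx ww)
    (hbc : ∀ t ∈ Set.Icc (0:ℝ) T, y t c = 0 ∧ y t d = 0)
    (hl₁ : ∀ t ∈ Set.Icc (0:ℝ) T,
      Filter.Tendsto (fun x => (1 - x) * (yt t x) ^ 2) (𝓝[<] 1) (𝓝 0))
    (hl₂ : ∀ t ∈ Set.Icc (0:ℝ) T,
      Filter.Tendsto (fun x => (x - 1) * (yt t x) ^ 2) (𝓝[>] 1) (𝓝 0))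
    (hl₃ : ∀ t ∈ Set.Icc (0:ℝ) T,
      Filter.Tendsto (fun x => (1 - x) * a x * (yx t x) ^ 2) (𝓝[<] 1) (𝓝 0))
    (hl₄ : ∀ t ∈ Set.Icc (0:ℝ) T,
      Filter.Tendsto (fun x => (x - 1) * a x * (yx t x) ^ 2) (𝓝[>] 1) (𝓝 0))
    (hhint : MeasureTheory.IntegrableOn h (Set.Ioo c d))
    (hdom : ∀ t ∈ Set.Icc (0:ℝ) T, ∀ x ∈ Set.Ioo c d \ {1},
      (yt t x) ^ 2 + (1 + |x - 1| * |a' x| / a x) * a x * (yx t x) ^ 2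
        + |x - 1| * (|yx t x * ytt t x| + |yt t x * ytx t x|) ≤ h x) :
    (1 - c) * a c * (∫ t in (0:ℝ)..T, (yx t c) ^ 2)
      + (d - 1) * a d * (∫ t in (0:ℝ)..T, (yx t d) ^ 2)
    = 2 * (∫ x in Set.Ioo c d,
        ((x - 1) * yx T x * yt T x - (x - 1) * yx 0 x * yt 0 x))
      + ∫ t in (0:ℝ)..T, ∫ x in Set.Ioo c d,
          ((yt t x) ^ 2 + (1 - (x - 1) * a' x / a x) * a x * (yx t x) ^ 2) := by
  have hcd : c < d := hc1.trans h1d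
  simpa only [mul_assoc, zero_add,
    hsol.intervalIntegral_yt_sq_eq_zero_of_dirichlet hT ⟨left_mem_Icc.2 hcd.le, hc1.ne⟩
      fun t ht => (hbc t ht).1,
    hsol.intervalIntegral_yt_sq_eq_zero_of_dirichlet hT ⟨right_mem_Icc.2 hcd.le, h1d.ne'⟩
      fun t ht => (hbc t ht).2] using
    stmt_17_general c d T a a' h y yt yx ytt ytx ww hc1 h1d hT.le hw hsol hl₁ hl₂ hl₃ hl₄ hhint hdom

end
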